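/- Let M := (ζ − z)‖g‖ b̂ᵀ + ẑ‖z‖(β − b)ᵀ ∈ ℝ^{k×h}, where z, ζ ∈ ℝᵏ, b, β ∈ ℝʰ with first coordinate of β − b equal to 0, b = (√m, (b^⊥)ᵀ)ᵀ with ‖b^⊥‖ ≤ √m·ρ, ρ ∈ [0,1), ‖g‖² = m + ‖b^⊥‖², and b̂ = b/‖b‖, ẑ = z/‖z‖. Then ‖M‖_F² ≥ m(1−ρ)‖ζ−z‖² + (1−ρ)‖z‖²‖β−b‖². -/

import Mathlib

open scoped BigOperators

/-- Lower bound on the Frobenius norm of `M = (ζ−z)‖g‖b̂ᵀ + ẑ‖z‖(β−b)ᵀ`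
(whose entries are `(ζᵢ−zᵢ)bⱼ + zᵢ(βⱼ−bⱼ)`):
`‖M‖_F² ≥ m(1−ρ)‖ζ−z‖² + (1−ρ)‖z‖²‖β−b‖²`. -/
theorem frobenius_M_lower_bound {k h m : ℕ} (hm : 0 < m) (hh : 0 < h)
    (ρ : ℝ) (hρ0 : 0 ≤ ρ) (hρ1 : ρ < 1)
    (z ζ : EuclideanSpace ℝ (Fin k)) (b β : EuclideanSpace ℝ (Fin h))
    (hb0 : b ⟨0, hh⟩ = Real.sqrt m)
    (hbperp : ∑ j ∈ Finset.univ.erase (⟨0, hh⟩ : Fin h), (b j) ^ 2 ≤ (m : ℝ) * ρ ^ 2)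
    (hβ0 : β ⟨0, hh⟩ = b ⟨0, hh⟩) :
    (m : ℝ) * (1 - ρ) * ‖ζ - z‖ ^ 2 + (1 - ρ) * ‖z‖ ^ 2 * ‖β - b‖ ^ 2
      ≤ ∑ i : Fin k, ∑ j : Fin h, ((ζ i - z i) * b j + z i * (β j - b j)) ^ 2 := by
  have expand : ∑ i : Fin k, ∑ j : Fin h, ((ζ i - z i) * b j + z i * (β j - b j)) ^ 2
      = (∑ i, (ζ i - z i) ^ 2) * (∑ j, (b j) ^ 2) + (∑ i, (z i) ^ 2) * (∑ j, (β j - b j) ^ 2)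
        + 2 * ((∑ i, (ζ i - z i) * z i) * (∑ j, b j * (β j - b j))) := by
    rw [Finset.sum_mul_sum, Finset.sum_mul_sum, Finset.sum_mul_sum]
    simp only [Finset.mul_sum, ← Finset.sum_add_distrib]
    refine Finset.sum_congr rfl fun i _ => Finset.sum_congr rfl fun j _ => ?_
    ring
  have hD : ‖ζ - z‖ ^ 2 = ∑ i, (ζ i - z i) ^ 2 := by
    simp [EuclideanSpace.norm_sq_eq]
  have hZ : ‖z‖ ^ 2 = ∑ i, (z i) ^ 2 := by
    simp [EuclideanSpace.norm_sq_eq]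
  have hE : ‖β - b‖ ^ 2 = ∑ j, (β j - b j) ^ 2 := by
    simp [EuclideanSpace.norm_sq_eq]
  have hE' : ∑ j, (β j - b j) ^ 2
      = ∑ j ∈ Finset.univ.erase (⟨0, hh⟩ : Fin h), (β j - b j) ^ 2 := by
    rw [← Finset.add_sum_erase _ _ (Finset.mem_univ (⟨0, hh⟩ : Fin h)), hβ0]
    simp
  have hS' : ∑ j, b j * (β j - b j)
      = ∑ j ∈ Finset.univ.erase (⟨0, hh⟩ : Fin h), b j * (β j - b j) := by
    rw [← Finset.add_sum_erase _ _ (Finset.mem_univ (⟨0, hh⟩ : Fin h)), hβ0]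
    simp
  have hB : (m : ℝ) ≤ ∑ j, (b j) ^ 2 := by
    rw [← Finset.add_sum_erase _ _ (Finset.mem_univ (⟨0, hh⟩ : Fin h)), hb0,
      Real.sq_sqrt (Nat.cast_nonneg m)]
    have := Finset.sum_nonneg (s := Finset.univ.erase (⟨0, hh⟩ : Fin h))
      (f := fun j => (b j) ^ 2) (fun j _ => sq_nonneg _)
    linarith
  have hD0 : 0 ≤ ∑ i, (ζ i - z i) ^ 2 := Finset.sum_nonneg fun i _ => sq_nonneg _
  have hZ0 : 0 ≤ ∑ i, (z i) ^ 2 := Finset.sum_nonneg fun i _ => sq_nonneg _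
  have hE0 : 0 ≤ ∑ j, (β j - b j) ^ 2 := Finset.sum_nonneg fun i _ => sq_nonneg _
  have hP := Finset.sum_mul_sq_le_sq_mul_sq Finset.univ (fun i => ζ i - z i) (fun i => z i)
  have hS : (∑ j, b j * (β j - b j)) ^ 2 ≤ (m : ℝ) * ρ ^ 2 * ∑ j, (β j - b j) ^ 2 := by
    have h1 := Finset.sum_mul_sq_le_sq_mul_sq (Finset.univ.erase (⟨0, hh⟩ : Fin h))
      (fun j => b j) (fun j => β j - b j)
    rw [← hS', ← hE'] at h1
    exact h1.trans (mul_le_mul_of_nonneg_right hbperp hE0)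
  rw [expand, hD, hZ, hE]
  generalize (∑ i, (ζ i - z i) ^ 2) = D at *
  generalize (∑ i, (z i) ^ 2) = Z at *
  generalize (∑ j, (β j - b j) ^ 2) = E at *
  generalize (∑ j, (b j) ^ 2) = B at *
  generalize (∑ j, b j * (β j - b j)) = S at *
  generalize (∑ i, (ζ i - z i) * z i) = P at *
  have hm0 : (0 : ℝ) ≤ m := Nat.cast_nonneg m
  have hPS : (P * S) ^ 2 ≤ (D * Z) * ((m : ℝ) * ρ ^ 2 * E) := by
    rw [mul_pow]
    exact mul_le_mul hP hS (sq_nonneg _) (mul_nonneg hD0 hZ0)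
  have hX : |2 * (P * S)| ≤ ρ * (m * D + Z * E) := by
    apply abs_le_of_sq_le_sq _ (by positivity)
    nlinarith [sq_nonneg (ρ * (m * D - Z * E))]
  have h2 := (abs_le.mp hX).1
  have h3 := mul_le_mul_of_nonneg_left hB hD0
  linarith
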